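/- Consider a K-layer feedforward network f^w with C = n_K output classes and monotone nondecreasing activation h, an input x ∈ ℝ^{n_0}, a class y, and ε ≥ 0. Then σ_y(f_{LB}^{w,ε}(x)) ≤ σ_y(f_min^{w,ε}(x)); i.e., the softmax of the IBP corner vector is a certified lower bound on the worst-case softmax of class y over the ℓ∞ ε-ball around x. -/

import Mathlib

/-- Activations of a feedforward network: `netPhi … x 0 = x` (the input `φ_(0)`) and
`netPhi … x (k+1) = h (W_k (netPhi … x k) + b_k)` (the activation `φ_(k+1)`).
For a `K`-layer network only the values with `k ≤ K - 1` are used. -/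
noncomputable def netPhi (n : ℕ → ℕ)
    (W : ∀ k : ℕ, Matrix (Fin (n (k + 1))) (Fin (n k)) ℝ)
    (b : ∀ k : ℕ, Fin (n (k + 1)) → ℝ) (h : ℝ → ℝ)
    (x : Fin (n 0) → ℝ) : (k : ℕ) → Fin (n k) → ℝ
  | 0 => x
  | (k + 1) => fun i => h (((W k).mulVec (netPhi n W b h x k) + b k) i)

/-- Pre-activations: `netPre … x k = W_k φ_(k) + b_k`, i.e. the pre-activation
`f_(k+1)` of the network.  The output of a `K`-layer network is `f^w(x) = netPre … x (K-1)`. -/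
noncomputable def netPre (n : ℕ → ℕ)
    (W : ∀ k : ℕ, Matrix (Fin (n (k + 1))) (Fin (n k)) ℝ)
    (b : ∀ k : ℕ, Fin (n (k + 1)) → ℝ) (h : ℝ → ℝ)
    (x : Fin (n 0) → ℝ) (k : ℕ) : Fin (n (k + 1)) → ℝ :=
  (W k).mulVec (netPhi n W b h x k) + b k

/-- Interval bound propagation on the activations: `ibpPhi … x ε k = (φ_(k)^L, φ_(k)^U)`.
At `k = 0` the bounds are `x ∓ ε·𝟙`; at `k+1` they are `h (μ_{k+1} ∓ r_{k+1})` with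
`μ_{k+1} = W_k (φ_(k)^U + φ_(k)^L)/2 + b_k` and `r_{k+1} = |W_k| (φ_(k)^U − φ_(k)^L)/2`. -/
noncomputable def ibpPhi (n : ℕ → ℕ)
    (W : ∀ k : ℕ, Matrix (Fin (n (k + 1))) (Fin (n k)) ℝ)
    (b : ∀ k : ℕ, Fin (n (k + 1)) → ℝ) (h : ℝ → ℝ)
    (x : Fin (n 0) → ℝ) (ε : ℝ) : (k : ℕ) → (Fin (n k) → ℝ) × (Fin (n k) → ℝ)
  | 0 => (fun i => x i - ε, fun i => x i + ε)
  | (k + 1) =>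
      let L := (ibpPhi n W b h x ε k).1
      let U := (ibpPhi n W b h x ε k).2
      let μ := (W k).mulVec (fun i => (U i + L i) / 2) + b k
      let r := (Matrix.of fun i j => |W k i j|).mulVec (fun i => (U i - L i) / 2)
      (fun i => h (μ i - r i), fun i => h (μ i + r i))

/-- Interval bound propagation on the pre-activations:
`ibpPre … x ε k = (f_(k+1)^L, f_(k+1)^U) = (μ_{k+1} − r_{k+1}, μ_{k+1} + r_{k+1})`.
The IBP output bounds of a `K`-layer network are `(f^{w,L,ε}, f^{w,U,ε}) = ibpPre … x ε (K-1)`. -/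
noncomputable def ibpPre (n : ℕ → ℕ)
    (W : ∀ k : ℕ, Matrix (Fin (n (k + 1))) (Fin (n k)) ℝ)
    (b : ∀ k : ℕ, Fin (n (k + 1)) → ℝ) (h : ℝ → ℝ)
    (x : Fin (n 0) → ℝ) (ε : ℝ) (k : ℕ) : (Fin (n (k + 1)) → ℝ) × (Fin (n (k + 1)) → ℝ) :=
  let L := (ibpPhi n W b h x ε k).1
  let U := (ibpPhi n W b h x ε k).2
  let μ := (W k).mulVec (fun i => (U i + L i) / 2) + b k
  let r := (Matrix.of fun i j => |W k i j|).mulVec (fun i => (U i - L i) / 2)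
  (fun i => μ i - r i, fun i => μ i + r i)

/-- Softmax probability of class `y` for logits `z ∈ ℝ^C`. -/
noncomputable def softmax {C : ℕ} (y : Fin C) (z : Fin C → ℝ) : ℝ :=
  Real.exp (z y) / ∑ j, Real.exp (z j)

/-- Worst-case softmax of class `y` on the `ℓ∞` ε-ball around `x`:
`σ_y(f_min^{w,ε}(x)) = inf { σ_y(f x') : ‖x − x'‖_∞ ≤ ε }`.
(The norm on `Fin d → ℝ` is the sup norm.) -/
noncomputable def minSoftmax {d C : ℕ} (f : (Fin d → ℝ) → Fin C → ℝ)
    (x : Fin d → ℝ) (y : Fin C) (ε : ℝ) : ℝ :=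
  sInf {p : ℝ | ∃ x' : Fin d → ℝ, ‖x - x'‖ ≤ ε ∧ p = softmax y (f x')}

/-- The corner vector `f_LB` with `(f_LB) y = L y` and `(f_LB) j = U j` for `j ≠ y`. -/
def cornerLB {C : ℕ} (y : Fin C) (L U : Fin C → ℝ) : Fin C → ℝ :=
  fun j => if j = y then L j else U j

/-!
In centre-radius form, an affine map `v ↦ A v + c` carries the box `|v - m| ≤ r` into the box with
centre `A m + c` and radius `|A| r`, and a monotone activation preserves componentwise bounds, so
by induction on the layers the IBP boxes enclose the network on the whole `ℓ∞` ball. Dividing by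
`exp (z y)`, softmax is the reciprocal of `∑ j, exp (z j - z y)`; it increases with `z y` and
decreases with the other logits, so over a box it is smallest at the corner `cornerLB`.
-/

section IntervalArithmetic

open Matrix

variable {m p R : Type*} [Fintype p]

theorem abs_mulVec_le [Ring R] [LinearOrder R] [IsOrderedRing R] (A : Matrix m p R) (v : p → R) :
    |A *ᵥ v| ≤ A.map abs *ᵥ |v| := fun i =>
  calc |∑ j, A i j * v j|
      ≤ ∑ j, |A i j * v j| := Finset.abs_sum_le_sum_abs _ _
    _ = ∑ j, |A i j| * |v j| := Finset.sum_congr rfl fun _ _ => abs_mul _ _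

theorem mulVec_le_mulVec_of_nonneg [Semiring R] [PartialOrder R] [IsOrderedRing R]
    {A : Matrix m p R} (hA : ∀ i j, 0 ≤ A i j) {v w : p → R} (hvw : v ≤ w) :
    A *ᵥ v ≤ A *ᵥ w :=
  fun i => dotProduct_le_dotProduct_of_nonneg_left hvw (hA i)

theorem abs_mulVec_sub_mulVec_le [Ring R] [LinearOrder R] [IsOrderedRing R] (A : Matrix m p R)
    {v c r : p → R} (hv : |v - c| ≤ r) : |A *ᵥ v - A *ᵥ c| ≤ A.map abs *ᵥ r :=
  calc |A *ᵥ v - A *ᵥ c|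
      = |A *ᵥ (v - c)| := by rw [mulVec_sub]
    _ ≤ A.map abs *ᵥ |v - c| := abs_mulVec_le A _
    _ ≤ A.map abs *ᵥ r := mulVec_le_mulVec_of_nonneg (fun i j => abs_nonneg (A i j)) hv

theorem abs_sub_midpoint_le_of_mem_Icc [Field R] [LinearOrder R] [IsStrictOrderedRing R]
    {a b t : R} (ht : t ∈ Set.Icc a b) : |t - (b + a) / 2| ≤ (b - a) / 2 := by
  rw [abs_le]
  constructor <;> linarith [ht.1, ht.2]

theorem mem_Icc_of_abs_sub_le {G : Type*} [AddCommGroup G] [Lattice G] [IsOrderedAddMonoid G]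
    {a c r : G} (ha : |a - c| ≤ r) : a ∈ Set.Icc (c - r) (c + r) := by
  obtain ⟨hupper, hlower⟩ := abs_le'.mp ha
  rw [neg_sub] at hlower
  exact ⟨sub_le_comm.mp hlower, sub_le_iff_le_add'.mp hupper⟩

theorem mulVec_add_mem_Icc [Field R] [LinearOrder R] [IsStrictOrderedRing R] (A : Matrix m p R)
    (c : m → R) {L U v : p → R} (hv : v ∈ Set.Icc L U) :
    A *ᵥ v + c ∈ Set.Icc
      (A *ᵥ (fun j => (U j + L j) / 2) + c - A.map abs *ᵥ fun j => (U j - L j) / 2)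
      (A *ᵥ (fun j => (U j + L j) / 2) + c + A.map abs *ᵥ fun j => (U j - L j) / 2) := by
  have hdev : |v - fun j => (U j + L j) / 2| ≤ fun j => (U j - L j) / 2 :=
    fun j => abs_sub_midpoint_le_of_mem_Icc ⟨hv.1 j, hv.2 j⟩
  apply mem_Icc_of_abs_sub_le
  rw [add_sub_add_right_eq_sub]
  exact abs_mulVec_sub_mulVec_le A hdev

end IntervalArithmetic

section IntervalBoundPropagation

variable {n : ℕ → ℕ} {W : ∀ k : ℕ, Matrix (Fin (n (k + 1))) (Fin (n k)) ℝ}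
  {b : ∀ k : ℕ, Fin (n (k + 1)) → ℝ} {h : ℝ → ℝ} {x x' : Fin (n 0) → ℝ} {ε : ℝ}

theorem netPre_mem_Icc_ibpPre_of_netPhi_mem {k : ℕ}
    (hφ : netPhi n W b h x' k ∈ Set.Icc (ibpPhi n W b h x ε k).1 (ibpPhi n W b h x ε k).2) :
    netPre n W b h x' k ∈ Set.Icc (ibpPre n W b h x ε k).1 (ibpPre n W b h x ε k).2 :=
  mulVec_add_mem_Icc (W k) (b k) hφ

theorem netPhi_mem_Icc_ibpPhi (hmono : Monotone h) (hx : ‖x - x'‖ ≤ ε) (k : ℕ) :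
    netPhi n W b h x' k ∈ Set.Icc (ibpPhi n W b h x ε k).1 (ibpPhi n W b h x ε k).2 := by
  induction k with
  | zero =>
    have hcoord (i : Fin (n 0)) : x' i ∈ Set.Icc (x i - ε) (x i + ε) :=
      Set.mem_Icc_iff_abs_le.mp ((norm_le_pi_norm (x - x') i).trans hx)
    exact ⟨fun i => (hcoord i).1, fun i => (hcoord i).2⟩
  | succ k ih =>
    obtain ⟨hlower, hupper⟩ := netPre_mem_Icc_ibpPre_of_netPhi_mem ih
    exact ⟨fun i => hmono (hlower i), fun i => hmono (hupper i)⟩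

theorem netPre_mem_Icc_ibpPre (hmono : Monotone h) (hx : ‖x - x'‖ ≤ ε) (k : ℕ) :
    netPre n W b h x' k ∈ Set.Icc (ibpPre n W b h x ε k).1 (ibpPre n W b h x ε k).2 :=
  netPre_mem_Icc_ibpPre_of_netPhi_mem (netPhi_mem_Icc_ibpPhi hmono hx k)

end IntervalBoundPropagation

section Softmax

variable {C : ℕ} {y : Fin C}

theorem softmax_eq_inv_sum_exp_sub (y : Fin C) (z : Fin C → ℝ) :
    softmax y z = (∑ j, Real.exp (z j - z y))⁻¹ := by
  simp only [softmax, Real.exp_sub, ← Finset.sum_div, inv_div]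

theorem softmax_le_softmax {z w : Fin C → ℝ} (hy : z y ≤ w y) (hne : ∀ j ≠ y, w j ≤ z j) :
    softmax y z ≤ softmax y w := by
  have hgap (j : Fin C) : w j - w y ≤ z j - z y := by
    obtain rfl | hj := eq_or_ne j y
    · simp only [sub_self, le_refl]
    · exact sub_le_sub (hne j hj) hy
  have hpos : 0 < ∑ j, Real.exp (w j - w y) :=
    Finset.sum_pos (fun j _ => Real.exp_pos _) ⟨y, Finset.mem_univ y⟩
  rw [softmax_eq_inv_sum_exp_sub, softmax_eq_inv_sum_exp_sub]
  exact inv_anti₀ hpos (Finset.sum_le_sum fun j _ => Real.exp_le_exp.mpr (hgap j))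

theorem softmax_cornerLB_le {L U z : Fin C → ℝ} (hz : z ∈ Set.Icc L U) :
    softmax y (cornerLB y L U) ≤ softmax y z :=
  softmax_le_softmax ((if_pos rfl).trans_le (hz.1 y))
    fun j hj => (hz.2 j).trans_eq (if_neg hj).symm

theorem le_minSoftmax {d : ℕ} {f : (Fin d → ℝ) → Fin C → ℝ} {x : Fin d → ℝ} {ε p : ℝ}
    (hε : 0 ≤ ε) (hp : ∀ x', ‖x - x'‖ ≤ ε → p ≤ softmax y (f x')) :
    p ≤ minSoftmax f x y ε := by
  refine le_csInf ⟨softmax y (f x), x, by simpa only [sub_self, norm_zero] using hε, rfl⟩ ?_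
  rintro _ ⟨x', hx', rfl⟩
  exact hp x' hx'

end Softmax

/-- the softmax of the IBP corner vector is a certified lower bound on the
worst-case softmax of class `y` over the `ℓ∞` ε-ball around `x`:
`σ_y(f_LB^{w,ε}(x)) ≤ σ_y(f_min^{w,ε}(x))`, for a `K`-layer network (`K ≥ 1`) with
monotone nondecreasing activation and `C = n K` output classes. -/
theorem ibp_cornerLB_le_minSoftmax (n : ℕ → ℕ)
    (W : ∀ k : ℕ, Matrix (Fin (n (k + 1))) (Fin (n k)) ℝ)
    (b : ∀ k : ℕ, Fin (n (k + 1)) → ℝ) (h : ℝ → ℝ) (hmono : Monotone h)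
    (K : ℕ) (hK : 1 ≤ K) (x : Fin (n 0) → ℝ) (y : Fin (n (K - 1 + 1)))
    (ε : ℝ) (hε : 0 ≤ ε) :
    softmax y (cornerLB y (ibpPre n W b h x ε (K - 1)).1 (ibpPre n W b h x ε (K - 1)).2) ≤
      minSoftmax (fun x' => netPre n W b h x' (K - 1)) x y ε :=
  le_minSoftmax hε fun _ hx' => softmax_cornerLB_le (netPre_mem_Icc_ibpPre hmono hx' (K - 1))
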